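/- For all X, Y ∈ 𝒞, the series Σ_{g∈G} L_g·π(L_g*X)·π(L_g*Y) converges unconditionally in the operator norm, with sum X ⋆ Y; i.e. the net of finite partial sums Σ_{g∈K} L_g X_g Y_g (over finite K ⊆ G directed by inclusion) converges in norm to X ⋆ Y, where X_g = π(L_g*X) and Y_g = π(L_g*Y). -/

import Mathlib

set_option synthInstance.maxHeartbeats 1000000
set_option maxHeartbeats 1000000

open scoped InnerProductSpace
open ContinuousLinearMap

noncomputable section

/-- `l2 G H` is the Hilbert space `ℓ²(G,H)` of square-summable `H`-valued functions on `G`. -/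
abbrev l2 (G : Type) (H : Type) [NormedAddCommGroup H] : Type := lp (fun _ : G => H) 2

/-- The Hadamard product `X ⋆ Y := V* ∘ ρ(X) ∘ F ∘ ρ(Y) ∘ V`. -/
def hadamard {H : Type} [NormedAddCommGroup H] [InnerProductSpace ℂ H] [CompleteSpace H]
    {G : Type}
    (ρ : (l2 G H →L[ℂ] l2 G H) → (l2 G (l2 G H) →L[ℂ] l2 G (l2 G H)))
    (V : l2 G H →L[ℂ] l2 G (l2 G H))
    (F : l2 G (l2 G H) →L[ℂ] l2 G (l2 G H))
    (X Y : l2 G H →L[ℂ] l2 G H) : l2 G H →L[ℂ] l2 G H :=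
  adjoint V ∘L (ρ X ∘L (F ∘L (ρ Y ∘L V)))

theorem aux_restrict {G H : Type} [NormedAddCommGroup H] (p : G → Prop) (x : l2 G H) :
    ∃ y : l2 G H, (∀ a, (p a → y a = x a) ∧ (¬ p a → y a = 0)) ∧ ∀ a, ‖y a‖ ≤ ‖x a‖ := by
  classical
  have hb : ∀ a, ‖(fun a => if p a then x a else 0 : G → H) a‖ ≤ ‖x a‖ := by
    intro a
    by_cases h : p a <;> simp [h]
  refine ⟨⟨fun a => if p a then x a else 0, Memℓp.mono' (lp.memℓp x) hb⟩, ?_, hb⟩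
  intro a
  constructor
  · intro h
    show (if p a then x a else 0) = x a
    simp [h]
  · intro h
    show (if p a then x a else 0) = 0
    simp [h]

theorem aux_restrict2 {G H : Type} [NormedAddCommGroup H] (p : G → G → Prop)
    (x : l2 G (l2 G H)) :
    ∃ y : l2 G (l2 G H), (∀ a b, (p a b → (y a : ∀ _ : G, H) b = (x a : ∀ _ : G, H) b) ∧
      (¬ p a b → (y a : ∀ _ : G, H) b = 0)) ∧ ‖y‖ ≤ ‖x‖ := by
  choose f hf hfn using fun a => aux_restrict (p a) (x a)
  have hb : ∀ a, ‖f a‖ ≤ ‖x a‖ := fun a => lp.norm_mono (by norm_num) (hfn a)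
  refine ⟨⟨f, Memℓp.mono' (lp.memℓp x) hb⟩, hf, ?_⟩
  exact lp.norm_mono (by norm_num) hb

section
variable {H : Type} [NormedAddCommGroup H] [InnerProductSpace ℂ H] [CompleteSpace H]
  {G : Type} [Group G] [DecidableEq G]

theorem aux_pi (π : (l2 G H →L[ℂ] l2 G H) → (l2 G H →L[ℂ] l2 G H))
    (hπ : ∀ (X : l2 G H →L[ℂ] l2 G H) (ξ η : l2 G H), ⟪π X ξ, η⟫_ℂ =
      ∑' g : G, ⟪X (lp.single 2 g ((ξ : ∀ _ : G, H) g)),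
        lp.single 2 g ((η : ∀ _ : G, H) g)⟫_ℂ)
    (X : l2 G H →L[ℂ] l2 G H) (ξ : l2 G H) (h : G) :
    (π X ξ : ∀ _ : G, H) h = (X (lp.single 2 h (ξ h)) : ∀ _ : G, H) h := by
  refine ext_inner_right ℂ fun w => ?_
  have := hπ X ξ (lp.single 2 h w)
  rw [lp.inner_single_right, tsum_eq_single h] at this
  · rw [this, lp.inner_single_right, lp.single_apply_self]
  · intro b hb
    rw [lp.single_apply_ne _ _ _ hb, lp.single_zero, inner_zero_right]

theorem aux_Lsingle (L : G → (l2 G H →L[ℂ] l2 G H))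
    (hL : ∀ (g : G) (ξ : l2 G H) (h : G),
      (L g ξ : ∀ _ : G, H) h = (ξ : ∀ _ : G, H) (g⁻¹ * h)) (g h : G) (w : H) :
    L g (lp.single 2 h w) = lp.single 2 (g * h) w := by
  ext k
  rw [hL]
  by_cases hk : k = g * h
  · subst hk
    rw [inv_mul_cancel_left, lp.single_apply_self, lp.single_apply_self]
  · rw [lp.single_apply_ne _ _ _ hk, lp.single_apply_ne]
    rintro rfl
    simp at hk

theorem aux_Lstar (L : G → (l2 G H →L[ℂ] l2 G H))
    (hL : ∀ (g : G) (ξ : l2 G H) (h : G),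
      (L g ξ : ∀ _ : G, H) h = (ξ : ∀ _ : G, H) (g⁻¹ * h)) (g h : G) (ξ : l2 G H) :
    ((star (L g)) ξ : ∀ _ : G, H) h = ξ (g * h) := by
  refine ext_inner_right ℂ fun w => ?_
  rw [← lp.inner_single_right, ← lp.inner_single_right, ContinuousLinearMap.star_eq_adjoint,
    ContinuousLinearMap.adjoint_inner_left, aux_Lsingle L hL]

theorem aux_Vstar (V : l2 G H →L[ℂ] l2 G (l2 G H))
    (hV : ∀ (ξ : l2 G H) (g : G),
      (V ξ : ∀ _ : G, l2 G H) g = lp.single 2 g ((ξ : ∀ _ : G, H) g))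
    (Z : l2 G (l2 G H)) (h : G) :
    (adjoint V Z : ∀ _ : G, H) h = (Z h : ∀ _ : G, H) h := by
  have hs : ∀ w : H, V (lp.single 2 h w) = lp.single 2 h (lp.single 2 h w) := by
    intro w
    ext1
    funext k
    rw [hV]
    by_cases hk : k = h
    · subst hk
      rw [lp.single_apply_self, lp.single_apply_self]
    · rw [lp.single_apply_ne _ _ _ hk, lp.single_apply_ne _ _ _ hk, lp.single_zero]
  refine ext_inner_right ℂ fun w => ?_
  rw [← lp.inner_single_right, ContinuousLinearMap.adjoint_inner_left, hs,
    lp.inner_single_right, lp.inner_single_right]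

theorem aux_rho (ρ : (l2 G H →L[ℂ] l2 G H) → (l2 G (l2 G H) →L[ℂ] l2 G (l2 G H)))
    (hρ : ∀ (X : l2 G H →L[ℂ] l2 G H) (Ξ : l2 G (l2 G H)) (g : G),
      (ρ X Ξ : ∀ _ : G, l2 G H) g = X ((Ξ : ∀ _ : G, l2 G H) g))
    (X : l2 G H →L[ℂ] l2 G H) (Z : l2 G (l2 G H)) : ‖ρ X Z‖ ≤ ‖X‖ * ‖Z‖ := by
  have h1 : ‖ρ X Z‖ ≤ ‖((‖X‖ : ℂ) • Z)‖ := by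
    refine lp.norm_mono (by norm_num) fun i => ?_
    rw [hρ, lp.coeFn_smul, Pi.smul_apply, norm_smul]
    simpa using X.le_opNorm (Z i)
  rw [norm_smul] at h1
  simpa using h1

/-- matrix coefficients of `X` supported on `{(a,b) : a b⁻¹ ∈ S}` -/
def auxSupp (S : Set G) (X : l2 G H →L[ℂ] l2 G H) : Prop :=
  ∀ (b : G) (v : H) (a : G), a * b⁻¹ ∉ S → (X (lp.single 2 b v) : ∀ _ : G, H) a = 0

theorem aux_apply_zero (X : l2 G H →L[ℂ] l2 G H) (x : l2 G H) (a : G)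
    (h : ∀ b, (X (lp.single 2 b (x b)) : ∀ _ : G, H) a = 0) : (X x : ∀ _ : G, H) a = 0 := by
  have h1 := lp.hasSum_single (p := 2) (by norm_num) x
  have h2 := h1.mapL ((lp.evalCLM ℂ (fun _ : G => H) 2 a) ∘L X)
  have h3 : (fun b => ((lp.evalCLM ℂ (fun _ : G => H) 2 a) ∘L X) (lp.single 2 b (x b))) = fun _ => 0 := by
    funext b
    exact h b
  rw [h3] at h2
  exact h2.unique hasSum_zero

open Pointwise in
theorem aux_adjoin {Sset : Set (l2 G H →L[ℂ] l2 G H)}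
    (h0 : ∀ X ∈ Sset, ∃ S : Set G, S.Finite ∧ auxSupp S X)
    (X : l2 G H →L[ℂ] l2 G H) (hX : X ∈ StarAlgebra.adjoin ℂ Sset) :
    ∃ S : Set G, S.Finite ∧ auxSupp S X := by
  induction hX using StarAlgebra.adjoin_induction with
  | mem x h => exact h0 x h
  | algebraMap r =>
    refine ⟨{1}, Set.finite_singleton _, fun b v a hab => ?_⟩
    have hne : a ≠ b := by
      rintro rfl
      simp at hab
    rw [Algebra.algebraMap_eq_smul_one, ContinuousLinearMap.smul_apply,
      ContinuousLinearMap.one_apply, lp.coeFn_smul, Pi.smul_apply,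
      lp.single_apply_ne _ _ _ hne, smul_zero]
  | add x y _ _ hx hy =>
    obtain ⟨S, hS, hx⟩ := hx
    obtain ⟨T, hT, hy⟩ := hy
    refine ⟨S ∪ T, hS.union hT, fun b v a hab => ?_⟩
    rw [Set.mem_union, not_or] at hab
    rw [ContinuousLinearMap.add_apply, lp.coeFn_add, Pi.add_apply, hx b v a hab.1,
      hy b v a hab.2, add_zero]
  | mul x y _ _ hx hy =>
    obtain ⟨S, hS, hx⟩ := hx
    obtain ⟨T, hT, hy⟩ := hy
    refine ⟨S * T, hS.mul hT, fun b v a hab => ?_⟩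
    rw [ContinuousLinearMap.mul_apply]
    refine aux_apply_zero x _ a fun c => ?_
    by_cases hc : c * b⁻¹ ∈ T
    · refine hx c _ a fun h => hab ?_
      have := Set.mul_mem_mul h hc
      simpa [mul_assoc] using this
    · rw [hy b v c hc, lp.single_zero, map_zero]
      rfl
  | star x _ hx =>
    obtain ⟨S, hS, hx⟩ := hx
    refine ⟨S⁻¹, hS.inv, fun b v a hab => ?_⟩
    refine ext_inner_right ℂ fun w => ?_
    rw [← lp.inner_single_right, ContinuousLinearMap.star_eq_adjoint,
      ContinuousLinearMap.adjoint_inner_left, lp.inner_single_left, hx a w b, inner_zero_right,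
      inner_zero_left]
    intro h
    apply hab
    rw [Set.mem_inv]
    simpa using h

/-- the restricted remainder -/
theorem aux_rem (L : G → (l2 G H →L[ℂ] l2 G H))
    (hL : ∀ (g : G) (ξ : l2 G H) (h : G),
      (L g ξ : ∀ _ : G, H) h = (ξ : ∀ _ : G, H) (g⁻¹ * h))
    (π : (l2 G H →L[ℂ] l2 G H) → (l2 G H →L[ℂ] l2 G H))
    (hπ : ∀ (X : l2 G H →L[ℂ] l2 G H) (ξ η : l2 G H), ⟪π X ξ, η⟫_ℂ =
      ∑' g : G, ⟪X (lp.single 2 g ((ξ : ∀ _ : G, H) g)),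
        lp.single 2 g ((η : ∀ _ : G, H) g)⟫_ℂ)
    (ρ : (l2 G H →L[ℂ] l2 G H) → (l2 G (l2 G H) →L[ℂ] l2 G (l2 G H)))
    (hρ : ∀ (X : l2 G H →L[ℂ] l2 G H) (Ξ : l2 G (l2 G H)) (g : G),
      (ρ X Ξ : ∀ _ : G, l2 G H) g = X ((Ξ : ∀ _ : G, l2 G H) g))
    (V : l2 G H →L[ℂ] l2 G (l2 G H))
    (hV : ∀ (ξ : l2 G H) (g : G),
      (V ξ : ∀ _ : G, l2 G H) g = lp.single 2 g ((ξ : ∀ _ : G, H) g))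
    (F : l2 G (l2 G H) →L[ℂ] l2 G (l2 G H))
    (hF : ∀ (Ξ : l2 G (l2 G H)) (g h : G),
      ((F Ξ : ∀ _ : G, l2 G H) g : ∀ _ : G, H) h
        = ((Ξ : ∀ _ : G, l2 G H) h : ∀ _ : G, H) g)
    (Y : l2 G H →L[ℂ] l2 G H) (K : Finset G) (ξ : l2 G H) :
    ∃ Z : l2 G (l2 G H), ‖Z‖ ≤ ‖F‖ * (‖Y‖ * (‖V‖ * ‖ξ‖)) ∧
      (∀ a b, a * b⁻¹ ∈ K → (Z a : ∀ _ : G, H) b = 0) ∧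
      ∀ X : l2 G H →L[ℂ] l2 G H,
        (hadamard ρ V F X Y - ∑ g ∈ K, L g * (π (star (L g) * X) * π (star (L g) * Y))) ξ
          = adjoint V (ρ X Z) := by
  obtain ⟨Z, hZ, hZn⟩ := aux_restrict2 (fun a b : G => a * b⁻¹ ∉ K) (F (ρ Y (V ξ)))
  refine ⟨Z, ?_, fun a b h => (hZ a b).2 (by simpa using h), fun X => ?_⟩
  · refine hZn.trans ((F.le_opNorm _).trans ?_)
    gcongr
    refine (aux_rho ρ hρ Y _).trans ?_
    gcongr
    exact V.le_opNorm _
  · ext a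
    have hc : ∀ b, ((F (ρ Y (V ξ)) : ∀ _ : G, l2 G H) a : ∀ _ : G, H) b
        = (Y (lp.single 2 b (ξ b)) : ∀ _ : G, H) a := by
      intro b
      rw [hF, hρ, hV]
    have hterm : ∀ g, ((L g * (π (star (L g) * X) * π (star (L g) * Y))) ξ : ∀ _ : G, H) a
        = (X (lp.single 2 (g⁻¹ * a)
            (((F (ρ Y (V ξ)) : ∀ _ : G, l2 G H) a : ∀ _ : G, H) (g⁻¹ * a))) : ∀ _ : G, H) a := by
      intro g
      rw [ContinuousLinearMap.mul_apply, ContinuousLinearMap.mul_apply, hL, aux_pi π hπ,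
        ContinuousLinearMap.mul_apply, aux_Lstar L hL, aux_pi π hπ,
        ContinuousLinearMap.mul_apply, aux_Lstar L hL, mul_inv_cancel_left, hc]
    have hsum : (F (ρ Y (V ξ)) : ∀ _ : G, l2 G H) a - ∑ g ∈ K, lp.single 2 (g⁻¹ * a)
            (((F (ρ Y (V ξ)) : ∀ _ : G, l2 G H) a : ∀ _ : G, H) (g⁻¹ * a)) = Z a := by
      ext b
      rw [lp.coeFn_sub, Pi.sub_apply, lp.coeFn_sum, Finset.sum_apply]
      have hne : ∀ g, g ≠ a * b⁻¹ → b ≠ g⁻¹ * a := by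
        rintro g hg rfl
        simp at hg
      by_cases hK : a * b⁻¹ ∈ K
      · rw [(hZ a b).2 (by simpa using hK), Finset.sum_eq_single (a * b⁻¹)]
        · have hb : (a * b⁻¹)⁻¹ * a = b := by group
          rw [hb, lp.single_apply_self, sub_self]
        · intro g _ hg
          exact lp.single_apply_ne _ _ _ (hne g hg)
        · intro h
          exact absurd hK h
      · rw [(hZ a b).1 hK, Finset.sum_eq_zero, sub_zero]
        intro g hg
        refine lp.single_apply_ne _ _ _ (hne g ?_)
        rintro rfl
        exact hK hg
    rw [aux_Vstar V hV, hρ, ← hsum, map_sub, map_sum, ContinuousLinearMap.sub_apply,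
      lp.coeFn_sub, Pi.sub_apply, lp.coeFn_sub, Pi.sub_apply, ContinuousLinearMap.sum_apply,
      lp.coeFn_sum, Finset.sum_apply, lp.coeFn_sum, Finset.sum_apply]
    congr 1
    · show (adjoint V (ρ X (F (ρ Y (V ξ)))) : ∀ _ : G, H) a = _
      rw [aux_Vstar V hV, hρ]
    · exact Finset.sum_congr rfl fun g _ => hterm g

end

theorem hadamard_stmt11
    {H : Type} [NormedAddCommGroup H] [InnerProductSpace ℂ H] [CompleteSpace H]
    {G : Type} [Group G] [DecidableEq G]
    (𝒜 : StarSubalgebra ℂ (H →L[ℂ] H))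
    (h𝒜 : IsClosed (𝒜 : Set (H →L[ℂ] H)))
    (hnd : Dense (↑(Submodule.span ℂ {v : H | ∃ A ∈ 𝒜, ∃ w : H, v = A w}) : Set H))
    (α : G → (𝒜 ≃⋆ₐ[ℂ] 𝒜))
    (hα1 : ∀ A, α 1 A = A)
    (hαmul : ∀ g h A, α (g * h) A = α g (α h A))
    (Ψ : 𝒜 → (l2 G H →L[ℂ] l2 G H))
    (hΨ : ∀ (A : 𝒜) (ξ : l2 G H) (g : G),
      (Ψ A ξ : ∀ _ : G, H) g = ((α g⁻¹ A : 𝒜) : H →L[ℂ] H) ((ξ : ∀ _ : G, H) g))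
    (L : G → (l2 G H →L[ℂ] l2 G H))
    (hL : ∀ (g : G) (ξ : l2 G H) (h : G),
      (L g ξ : ∀ _ : G, H) h = (ξ : ∀ _ : G, H) (g⁻¹ * h))
    (𝒞 : Set (l2 G H →L[ℂ] l2 G H))
    (h𝒞 : 𝒞 = ((StarAlgebra.adjoin ℂ
        (Set.range Ψ ∪ Set.range L)).topologicalClosure : Set _))
    (π : (l2 G H →L[ℂ] l2 G H) → (l2 G H →L[ℂ] l2 G H))
    (hπ : ∀ (X : l2 G H →L[ℂ] l2 G H) (ξ η : l2 G H), ⟪π X ξ, η⟫_ℂ =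
      ∑' g : G, ⟪X (lp.single 2 g ((ξ : ∀ _ : G, H) g)),
        lp.single 2 g ((η : ∀ _ : G, H) g)⟫_ℂ)
    (ρ : (l2 G H →L[ℂ] l2 G H) → (l2 G (l2 G H) →L[ℂ] l2 G (l2 G H)))
    (hρ : ∀ (X : l2 G H →L[ℂ] l2 G H) (Ξ : l2 G (l2 G H)) (g : G),
      (ρ X Ξ : ∀ _ : G, l2 G H) g = X ((Ξ : ∀ _ : G, l2 G H) g))
    (V : l2 G H →L[ℂ] l2 G (l2 G H))
    (hV : ∀ (ξ : l2 G H) (g : G),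
      (V ξ : ∀ _ : G, l2 G H) g = lp.single 2 g ((ξ : ∀ _ : G, H) g))
    (F : l2 G (l2 G H) →L[ℂ] l2 G (l2 G H))
    (hF : ∀ (Ξ : l2 G (l2 G H)) (g h : G),
      ((F Ξ : ∀ _ : G, l2 G H) g : ∀ _ : G, H) h
        = ((Ξ : ∀ _ : G, l2 G H) h : ∀ _ : G, H) g)
    :
    ∀ X ∈ 𝒞, ∀ Y ∈ 𝒞,
      HasSum (fun g : G => L g * (π (star (L g) * X) * π (star (L g) * Y)))
        (hadamard ρ V F X Y) := by
  intro X hX Y _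
  set R : Finset G → (l2 G H →L[ℂ] l2 G H) → (l2 G H →L[ℂ] l2 G H) := fun K X =>
    hadamard ρ V F X Y - ∑ g ∈ K, L g * (π (star (L g) * X) * π (star (L g) * Y)) with hR
  have key := aux_rem L hL π hπ ρ hρ V hV F hF Y
  set C : ℝ := ‖adjoint V‖ * (‖F‖ * (‖Y‖ * ‖V‖)) with hC
  have hC0 : 0 ≤ C := by positivity
  have hbound : ∀ K X, ‖R K X‖ ≤ C * ‖X‖ := by
    intro K X
    refine ContinuousLinearMap.opNorm_le_bound _ (by positivity) fun ξ => ?_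
    obtain ⟨Z, hZ, _, h⟩ := key K ξ
    have h1 : R K X ξ = adjoint V (ρ X Z) := h X
    rw [h1]
    calc ‖adjoint V (ρ X Z)‖ ≤ ‖adjoint V‖ * ‖ρ X Z‖ := ContinuousLinearMap.le_opNorm _ _
      _ ≤ ‖adjoint V‖ * (‖X‖ * (‖F‖ * (‖Y‖ * (‖V‖ * ‖ξ‖)))) := by
        gcongr
        exact (aux_rho ρ hρ X Z).trans (by gcongr)
      _ = C * ‖X‖ * ‖ξ‖ := by rw [hC]; ring
  have hadd : ∀ K X X', R K X = R K (X - X') + R K X' := by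
    intro K X X'
    refine ContinuousLinearMap.ext fun ξ => ?_
    obtain ⟨Z, _, _, h⟩ := key K ξ
    have h1 : ∀ X, R K X ξ = adjoint V (ρ X Z) := h
    rw [ContinuousLinearMap.add_apply, h1, h1, h1, ← map_add]
    congr 1
    ext1
    funext a
    rw [lp.coeFn_add, Pi.add_apply, hρ, hρ, hρ, ContinuousLinearMap.sub_apply, sub_add_cancel]
  have hzero : ∀ (S : Set G) (X' : l2 G H →L[ℂ] l2 G H), auxSupp S X' →
      ∀ K : Finset G, S ⊆ K → R K X' = 0 := by
    intro S X' hX' K hK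
    refine ContinuousLinearMap.ext fun ξ => ?_
    obtain ⟨Z, _, hz, h⟩ := key K ξ
    have h1 : R K X' ξ = adjoint V (ρ X' Z) := h X'
    rw [h1]
    ext a
    rw [aux_Vstar V hV, hρ]
    refine aux_apply_zero X' _ a fun b => ?_
    by_cases hab : a * b⁻¹ ∈ K
    · rw [hz a b hab, lp.single_zero, map_zero]
      rfl
    · exact hX' b _ a fun h => hab (hK h)
  have hgen : ∀ T ∈ Set.range Ψ ∪ Set.range L, ∃ S : Set G, S.Finite ∧ auxSupp S T := by
    rintro T (⟨A, rfl⟩ | ⟨g, rfl⟩)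
    · refine ⟨{1}, Set.finite_singleton _, fun b v a hab => ?_⟩
      have hne : a ≠ b := by
        rintro rfl
        simp at hab
      rw [hΨ, lp.single_apply_ne _ _ _ hne, map_zero]
    · refine ⟨{g}, Set.finite_singleton _, fun b v a hab => ?_⟩
      rw [aux_Lsingle L hL, lp.single_apply_ne]
      rintro rfl
      simp at hab
  rw [h𝒞, StarSubalgebra.topologicalClosure_coe] at hX
  rw [HasSum, SummationFilter.unconditional_filter, Metric.tendsto_atTop]
  intro ε hε
  obtain ⟨X', hX', hd⟩ := Metric.mem_closure_iff.1 hX (ε / (C + 1)) (by positivity)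
  obtain ⟨S, hS, hSX⟩ := aux_adjoin hgen X' hX'
  refine ⟨hS.toFinset, fun K hK => ?_⟩
  rw [dist_comm, dist_eq_norm]
  show ‖R K X‖ < ε
  rw [hadd K X X', hzero S X' hSX K (fun s hs => hK (by simpa using hs)), add_zero]
  rw [dist_eq_norm] at hd
  calc ‖R K (X - X')‖ ≤ C * ‖X - X'‖ := hbound _ _
    _ ≤ (C + 1) * ‖X - X'‖ := by gcongr; linarith
    _ < (C + 1) * (ε / (C + 1)) := by gcongr
    _ = ε := by field_simp
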